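/- Let G be a finite oriented multigraph with a total order ≺ on E(G), A a finite abelian group, and b : V(G) → A locally zero-sum. Then the number of nowhere-zero (A,b)-flows of G equals Σ_{i=0}^{m(G)} (−1)^i a_i(G,b) |A|^{m(G)−i}, where a_i(G,b) is the number of i-element subsets S of E(G) such that G−S is b-compatible and S contains no b-compatible broken bond with respect to ≺. -/

import Mathlib

open Finset

attribute [local instance] Classical.propDecidable

universe u v w

/-- Adjacency through a present edge in the spanning subgraph with edge predicate `ok`. -/
def edgeRel {V E : Type*} (head tail : E → V) (ok : E → Prop) (u v : V) : Prop :=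
  ∃ e, ok e ∧ ((head e = u ∧ tail e = v) ∨ (head e = v ∧ tail e = u))

/-- Reachability (same connected component) in the spanning subgraph. -/
def Reach {V E : Type*} (head tail : E → V) (ok : E → Prop) : V → V → Prop :=
  Relation.EqvGen (edgeRel head tail ok)

/-- Number of connected components of the spanning subgraph. -/
noncomputable def ncomp {V E : Type*} (head tail : E → V) (ok : E → Prop) : ℕ :=
  Nat.card (Quotient (Relation.EqvGen.setoid (edgeRel head tail ok)))

/-- Boundary of an edge-valued function, via the orientation `head`/`tail`. -/
noncomputable def bdry {V E A : Type*} [Fintype E] [AddCommGroup A]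
    (head tail : E → V) (f : E → A) (v : V) : A :=
  ∑ e : E, ((if head e = v then f e else 0) - (if tail e = v then f e else 0))

/-- Boundary of an edge-valued function on the spanning subgraph with edges `ok`. -/
noncomputable def bdrySub {V E A : Type*} [Fintype E] [AddCommGroup A]
    (head tail : E → V) (ok : E → Prop) (f : {e : E // ok e} → A) (v : V) : A :=
  ∑ e : {e : E // ok e}, ((if head e.1 = v then f e else 0) - (if tail e.1 = v then f e else 0))

/-- `b` sums to zero over every connected component of the spanning subgraph
(`b`-compatibility / locally zero-sum). -/
def Compatible {V E A : Type*} [Fintype V] [AddCommGroup A]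
    (head tail : E → V) (ok : E → Prop) (b : V → A) : Prop :=
  ∀ v : V, (∑ u : V, if Reach head tail ok u v then b u else 0) = 0

/-- A bond: a minimal nonempty edge set whose deletion changes the number of components,
equivalently a minimal nonempty edge cut. -/
def IsBond {V E : Type*} (head tail : E → V) (F : Finset E) : Prop :=
  F.Nonempty ∧ ncomp head tail (fun e => e ∉ F) ≠ ncomp head tail (fun _ => True) ∧
    ∀ F' : Finset E, F' ⊂ F → ncomp head tail (fun e => e ∉ F') = ncomp head tail (fun _ => True)

/-- Cycle rank `m(G-S) = |E(G-S)| - |V| + c(G-S)` of the spanning subgraph `G-S`. -/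
noncomputable def cycRank {V E : Type*} [Fintype V] [Fintype E]
    (head tail : E → V) (S : Finset E) : ℕ :=
  (Fintype.card E - S.card) + ncomp head tail (fun e => e ∉ S) - Fintype.card V

/-- A `b`-compatible bond. -/
def IsCBond {V E A : Type*} [Fintype V] [AddCommGroup A]
    (head tail : E → V) (b : V → A) (F : Finset E) : Prop :=
  IsBond head tail F ∧ Compatible head tail (fun e => e ∉ F) b

/-- A `b`-compatible broken bond w.r.t. the total order `lo` on edges. -/
def IsCBrokenBond {V E A : Type*} [Fintype V] [AddCommGroup A]
    (head tail : E → V) (lo : LinearOrder E) (b : V → A) (B : Finset E) : Prop :=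
  ∃ F : Finset E, IsCBond head tail b F ∧
    ∃ hne : F.Nonempty, B = F.erase (@Finset.max' E lo F hne)

/-- The signless coefficient `a_i(G,b)`: the number of `i`-edge subsets `S` with `G-S`
`b`-compatible and `S` containing no `b`-compatible broken bond. -/
noncomputable def aCoeff {V E A : Type*} [Fintype V] [Fintype E] [AddCommGroup A]
    (head tail : E → V) (lo : LinearOrder E) (b : V → A) (i : ℕ) : ℕ :=
  Nat.card {S : Finset E // S.card = i ∧ Compatible head tail (fun e => e ∉ S) b ∧
    ∀ B : Finset E, IsCBrokenBond head tail lo b B → ¬ B ⊆ S}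

/-- Adjacency inside the induced subgraph on the vertex set `X`. -/
def edgeRelIn {V E : Type*} (head tail : E → V) (X : Set V) (u v : V) : Prop :=
  ∃ e, head e ∈ X ∧ tail e ∈ X ∧ ((head e = u ∧ tail e = v) ∨ (head e = v ∧ tail e = u))

/-- Reachability within the induced subgraph on `X`. -/
def ReachIn {V E : Type*} (head tail : E → V) (X : Set V) : V → V → Prop :=
  Relation.EqvGen (edgeRelIn head tail X)

def setoidOn {V E : Type*} (head tail : E → V) (X : Set V) : Setoid {v : V // v ∈ X} :=
  ⟨fun a b => ReachIn head tail X a.1 b.1,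
   ⟨fun a => Relation.EqvGen.refl a.1, fun h => Relation.EqvGen.symm _ _ h, fun h h' => Relation.EqvGen.trans _ _ _ h h'⟩⟩

/-- Number of connected components of the induced subgraph on `X`. -/
noncomputable def ncompOn {V E : Type*} (head tail : E → V) (X : Set V) : ℕ :=
  Nat.card (Quotient (setoidOn head tail X))

/-- `X ∈ Λ(G)`: `X` nonempty, `G[X]` connected and `c(G-X) = c(G)`. -/
def InLambda {V E : Type*} [Fintype V] (head tail : E → V) (X : Finset V) : Prop :=
  X.Nonempty ∧ (∀ u ∈ X, ∀ v ∈ X, ReachIn head tail (↑X) u v) ∧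
    ncompOn head tail ((↑X : Set V)ᶜ) = ncomp head tail (fun _ => True)

/-!
By inclusion–exclusion over the edges where a flow vanishes, the number of nowhere-zero flows is
`∑ S, (-1) ^ |S| * N S`, where `N S` counts the flows of `G - S`. If `S` contains a `b`-compatible
broken bond `F - e`, then conservation across the cut `F` forces every flow of `G - S` to vanish
at `e`, so `N` does not change when `e` is inserted into or deleted from `S`. Toggling the least
such `e` cancels all terms except those in which `S` contains no `b`-compatible broken bond.

If moreover `G - S` is `b`-compatible, then `S` contains no bond at all, so `c(G - S) = c(G)`. The
image of the boundary operator of `G - S` is the group of functions summing to zero on every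
component, hence `N S = |A| ^ m(G - S) = |A| ^ (m(G) - |S|)`; if `G - S` is not `b`-compatible, then
`N S = 0`.
-/

section Pivot

variable {E : Type*} [LinearOrder E]

/-- `e` is a pivot of `S` for the family `𝓕` if it is the greatest element of some `F ∈ 𝓕` whose
remaining elements all lie in `S`; that is, if `S` contains a broken member of `𝓕` with missing
element `e`. Inserting or deleting a pivot is the move of Whitney's cancellation argument. -/
def IsPivot (𝓕 : Set (Finset E)) (S : Finset E) (e : E) : Prop :=
  ∃ F ∈ 𝓕, IsGreatest (F : Set E) e ∧ ∀ x ∈ F, x ≠ e → x ∈ S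

theorem isPivot_congr {𝓕 : Set (Finset E)} {S T : Finset E} {e : E}
    (h : ∀ x < e, x ∈ S ↔ x ∈ T) : IsPivot 𝓕 S e ↔ IsPivot 𝓕 T e := by
  refine exists_congr fun F => and_congr_right fun _ => and_congr_right fun he =>
    forall₂_congr fun x hx => imp_congr_right fun hxe => ?_
  exact h x (lt_of_le_of_ne (he.2 hx) hxe)

theorem isPivot_symmDiff_singleton_iff {𝓕 : Set (Finset E)} {S : Finset E} {e e' : E}
    (h : e' ≤ e) : IsPivot 𝓕 (symmDiff S {e}) e' ↔ IsPivot 𝓕 S e' :=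
  isPivot_congr fun x hx => by simp [mem_symmDiff, (hx.trans_le h).ne]

theorem isLeast_isPivot_symmDiff_singleton {𝓕 : Set (Finset E)} {S : Finset E} {e : E}
    (h : IsLeast {x | IsPivot 𝓕 S x} e) : IsLeast {x | IsPivot 𝓕 (symmDiff S {e}) x} e := by
  refine ⟨(isPivot_symmDiff_singleton_iff le_rfl).2 h.1, fun x hx => ?_⟩
  by_contra! hlt
  exact hlt.not_ge (h.2 ((isPivot_symmDiff_singleton_iff hlt.le).1 hx))

theorem neg_one_pow_card_symmDiff_singleton {R : Type*} [Ring R] (S : Finset E) (e : E) :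
    (-1 : R) ^ #(symmDiff S {e}) = -(-1) ^ #S := by
  by_cases he : e ∈ S
  · have h : symmDiff S {e} = S.erase e := by grind [mem_symmDiff]
    rw [h, ← card_erase_add_one he, pow_succ, mul_neg_one, neg_neg]
  · have h : symmDiff S {e} = insert e S := by grind [mem_symmDiff]
    rw [h, card_insert_of_notMem he, pow_succ, mul_neg_one]

theorem apply_symmDiff_singleton_of_isPivot {R : Type*} {𝓕 : Set (Finset E)} {N : Finset E → R}
    (hN : ∀ S e, IsPivot 𝓕 S e → N (insert e S) = N S) {S : Finset E} {e : E}
    (h : IsPivot 𝓕 S e) : N (symmDiff S {e}) = N S := by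
  rw [← hN S e h, ← hN _ e ((isPivot_symmDiff_singleton_iff le_rfl).2 h)]
  congr 1
  grind [mem_symmDiff]

variable [Fintype E] {R : Type*} [Ring R]

theorem sum_isPivot_eq_zero {𝓕 : Set (Finset E)} {N : Finset E → R}
    (hN : ∀ S e, IsPivot 𝓕 S e → N (insert e S) = N S) :
    ∑ S with ∃ e, IsPivot 𝓕 S e, (-1) ^ #S * N S = 0 := by
  have hleast (S : Finset E) (hS : ∃ e, IsPivot 𝓕 S e) : ∃ e, IsLeast {x | IsPivot 𝓕 S x} e := by
    obtain ⟨e, he⟩ := Set.exists_min_image {x | IsPivot 𝓕 S x} id (Set.toFinite _) hS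
    exact ⟨e, he⟩
  choose μ hμ using hleast
  have hpivots {S : Finset E} : S ∈ ({S | ∃ e, IsPivot 𝓕 S e} : Finset _) ↔ ∃ e, IsPivot 𝓕 S e :=
    mem_filter_univ S
  refine sum_involution (fun S hS => symmDiff S {μ S (hpivots.1 hS)}) (fun S hS => ?_)
    (fun S hS _ => ?_) (fun S hS => ?_) (fun S hS => ?_)
  · rw [neg_one_pow_card_symmDiff_singleton,
      apply_symmDiff_singleton_of_isPivot hN (hμ S (hpivots.1 hS)).1, neg_mul, add_neg_cancel]
  · simp [symmDiff_eq_left]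
  · exact hpivots.2 ⟨_, (isLeast_isPivot_symmDiff_singleton (hμ S (hpivots.1 hS))).1⟩
  · have hS' := isLeast_isPivot_symmDiff_singleton (hμ S (hpivots.1 hS))
    simp only [(hμ _ ⟨_, hS'.1⟩).unique hS', symmDiff_symmDiff_cancel_right]

theorem sum_neg_one_pow_card_mul_eq_sum_not_isPivot {𝓕 : Set (Finset E)} {N : Finset E → R}
    (hN : ∀ S e, IsPivot 𝓕 S e → N (insert e S) = N S) :
    ∑ S, (-1) ^ #S * N S = ∑ S with ¬∃ e, IsPivot 𝓕 S e, (-1) ^ #S * N S := by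
  rw [← sum_filter_add_sum_filter_not univ (fun S => ∃ e, IsPivot 𝓕 S e), sum_isPivot_eq_zero hN,
    zero_add]

end Pivot

theorem card_forall_not_eq_sum {ι α : Type*} [Fintype ι] [Finite α] (q : α → Prop)
    (p : ι → α → Prop) :
    (Nat.card {a // q a ∧ ∀ i, ¬p i a} : ℤ) =
      ∑ S : Finset ι, (-1) ^ #S * (Nat.card {a // q a ∧ ∀ i ∈ S, p i a} : ℤ) := by
  have := Fintype.ofFinite α
  have hinf (S : Finset ι) (s : ι → Finset α) :
      (∑ a ∈ S.inf s, if q a then (1 : ℤ) else 0) = Nat.card {a // q a ∧ ∀ i ∈ S, a ∈ s i} := by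
    rw [Nat.subtype_card {a ∈ S.inf s | q a} (by simp [mem_inf, and_comm])]
    simp only [sum_boole]
  have h := inclusion_exclusion_sum_inf_compl univ (fun i => {a | p i a})
    (fun a => if q a then (1 : ℤ) else 0)
  simpa [hinf] using h

section Pushforward

variable {X Y Z A : Type*} [Fintype X]

/-- The pushforward of an `A`-valued function along `π`, obtained by summing over fibres. The
boundary operator is a difference of two pushforwards and compatibility says that the pushforward
to the set of components vanishes. -/
noncomputable def pushforward [AddCommMonoid A] (π : X → Y) : (X → A) →+ (Y → A) where
  toFun f y := ∑ x, if π x = y then f x else 0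
  map_zero' := by ext; simp
  map_add' f g := by ext; simp [← sum_add_distrib, ite_add_zero]

theorem pushforward_apply [AddCommMonoid A] (π : X → Y) (f : X → A) (y : Y) :
    pushforward π f y = ∑ x, if π x = y then f x else 0 :=
  rfl

theorem pushforward_eq_sum_single [AddCommMonoid A] (π : X → Y) (f : X → A) :
    pushforward π f = ∑ x, Pi.single (π x) (f x) := by
  ext y
  simp only [pushforward_apply, Finset.sum_apply, Pi.single_apply, eq_comm]

theorem pushforward_single [AddCommMonoid A] (π : X → Y) (x : X) (a : A) :
    pushforward π (Pi.single x a) = Pi.single (π x) a := by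
  rw [pushforward_eq_sum_single, Fintype.sum_eq_single x, Pi.single_eq_same]
  intro x' hx'
  rw [Pi.single_eq_of_ne hx', Pi.single_zero]

theorem pushforward_id [AddCommMonoid A] (f : X → A) : pushforward id f = f := by
  simp [pushforward_eq_sum_single, univ_sum_single]

theorem pushforward_pushforward [Fintype Y] [AddCommMonoid A] (ρ : Y → Z) (π : X → Y) (f : X → A) :
    pushforward ρ (pushforward π f) = pushforward (ρ ∘ π) f := by
  simp only [pushforward_eq_sum_single π, pushforward_eq_sum_single (ρ ∘ π), map_sum,
    pushforward_single, Function.comp_apply]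

theorem pushforward_surjective [AddCommMonoid A] {π : X → Y} (hπ : Function.Surjective π) :
    Function.Surjective (pushforward π : (X → A) →+ (Y → A)) := by
  have := Fintype.ofSurjective π hπ
  refine fun g => ⟨pushforward (Function.surjInv hπ) g, ?_⟩
  rw [pushforward_pushforward, (Function.rightInverse_surjInv hπ).id, pushforward_id]

end Pushforward

section Boundary

variable {V E A : Type*} [Fintype E] [AddCommGroup A]

/-- The boundary operator `bdry` as a group homomorphism. -/
noncomputable def bdryHom (A : Type*) [AddCommGroup A] (head tail : E → V) :
    (E → A) →+ (V → A) :=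
  pushforward head - pushforward tail

theorem bdryHom_apply (head tail : E → V) (f : E → A) :
    bdryHom A head tail f = bdry head tail f := by
  ext v
  simp only [bdryHom, AddMonoidHom.sub_apply, Pi.sub_apply, pushforward_apply, bdry,
    sum_sub_distrib]

theorem bdry_eq_sum_single (head tail : E → V) (f : E → A) :
    bdry head tail f = ∑ e, (Pi.single (head e) (f e) - Pi.single (tail e) (f e)) := by
  rw [← bdryHom_apply, bdryHom, AddMonoidHom.sub_apply, pushforward_eq_sum_single,
    pushforward_eq_sum_single, sum_sub_distrib]

theorem pushforward_bdry [Fintype V] {W : Type*} (π : V → W) (head tail : E → V) (f : E → A) :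
    pushforward π (bdry head tail f) = bdry (π ∘ head) (π ∘ tail) f := by
  simp only [bdry_eq_sum_single, map_sum, map_sub, pushforward_single, Function.comp_apply]

end Boundary

section Component

variable {V E : Type*} {head tail : E → V} {ok ok' : E → Prop}

/-- The connected component of a vertex in the spanning subgraph with edge predicate `ok`, as an
element of the quotient counted by `ncomp`. -/
def component (head tail : E → V) (ok : E → Prop) (v : V) :
    Quotient (Relation.EqvGen.setoid (edgeRel head tail ok)) :=
  Quotient.mk _ v

theorem component_surjective : Function.Surjective (component head tail ok) :=
  Quotient.mk_surjective

theorem component_eq_iff {u v : V} :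
    component head tail ok u = component head tail ok v ↔ Reach head tail ok u v :=
  Quotient.eq

theorem component_head_eq_tail {e : E} (he : ok e) :
    component head tail ok (head e) = component head tail ok (tail e) :=
  component_eq_iff.2 (.rel _ _ ⟨e, he, .inl ⟨rfl, rfl⟩⟩)

theorem Reach.of_forall_edge {r : V → V → Prop} (hr : Equivalence r)
    (h : ∀ e, ok e → r (head e) (tail e)) {u v : V} (huv : Reach head tail ok u v) : r u v := by
  induction huv with
  | rel x y hxy =>
    obtain ⟨e, he, ⟨rfl, rfl⟩ | ⟨rfl, rfl⟩⟩ := hxy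
    · exact h e he
    · exact hr.symm (h e he)
  | refl x => exact hr.refl x
  | symm x y _ ih => exact hr.symm ih
  | trans x y z _ _ ih₁ ih₂ => exact hr.trans ih₁ ih₂

theorem ncomp_eq_of_forall_edge
    (h : ∀ e, ok e → Reach head tail ok' (head e) (tail e))
    (h' : ∀ e, ok' e → Reach head tail ok (head e) (tail e)) :
    ncomp head tail ok = ncomp head tail ok' := by
  have hsetoid : Relation.EqvGen.setoid (edgeRel head tail ok) =
      Relation.EqvGen.setoid (edgeRel head tail ok') :=
    Setoid.ext fun u v => ⟨Reach.of_forall_edge (Relation.EqvGen.is_equivalence _) h,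
      Reach.of_forall_edge (Relation.EqvGen.is_equivalence _) h'⟩
  rw [ncomp, ncomp, hsetoid]

variable [Fintype V] {A : Type*} [AddCommGroup A]

theorem compatible_iff_pushforward_eq_zero {b : V → A} :
    Compatible head tail ok b ↔ pushforward (component head tail ok) b = 0 := by
  rw [funext_iff, component_surjective.forall]
  simp only [Compatible, pushforward_apply, component_eq_iff, Pi.zero_apply]

theorem Compatible.mono (h : ∀ e, ok e → ok' e) {b : V → A} (hb : Compatible head tail ok b) :
    Compatible head tail ok' b := by
  have := Fintype.ofSurjective _ (component_surjective (head := head) (tail := tail) (ok := ok))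
  have hlift (u v : V) (huv : Reach head tail ok u v) :
      component head tail ok' u = component head tail ok' v :=
    huv.of_forall_edge (r := fun u v => component head tail ok' u = component head tail ok' v)
      ⟨fun _ => rfl, Eq.symm, Eq.trans⟩ fun e he => component_head_eq_tail (h e he)
  have hcomp : component head tail ok' =
      Quotient.lift (component head tail ok') hlift ∘ component head tail ok := rfl
  rw [compatible_iff_pushforward_eq_zero, hcomp, ← pushforward_pushforward,
    compatible_iff_pushforward_eq_zero.1 hb, map_zero]

end Component

section Flows

variable {V E A : Type*} [AddCommGroup A]

/-- The `A`-valued functions on the edges of `G - S`, extended by zero to all edges of `G`. -/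
def chainsOff (A : Type*) [AddCommGroup A] (S : Finset E) : AddSubgroup (E → A) :=
  AddSubgroup.pi S fun _ => ⊥

theorem mem_chainsOff {S : Finset E} {f : E → A} : f ∈ chainsOff A S ↔ ∀ e ∈ S, f e = 0 := by
  simp [chainsOff, AddSubgroup.mem_pi]

theorem single_mem_chainsOff {S : Finset E} {e : E} (he : e ∉ S) (a : A) :
    Pi.single e a ∈ chainsOff A S :=
  mem_chainsOff.2 fun _ hx => Pi.single_eq_of_ne (M := fun _ => A) (ne_of_mem_of_not_mem hx he) a

theorem card_chainsOff [Fintype E] [Fintype A] (S : Finset E) :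
    Nat.card (chainsOff A S) = Fintype.card A ^ (Fintype.card E - #S) := by
  have hmem (f : E → A) :
      f ∈ Fintype.piFinset (fun e => if e ∈ S then {0} else univ) ↔ f ∈ chainsOff A S := by
    rw [Fintype.mem_piFinset, mem_chainsOff]
    exact forall_congr' fun e => by by_cases he : e ∈ S <;> simp [he]
  calc Nat.card (chainsOff A S)
      = #(Fintype.piFinset fun e => if e ∈ S then {(0 : A)} else univ) := Nat.subtype_card _ hmem
    _ = Fintype.card A ^ #Sᶜ := by
        rw [Fintype.card_piFinset]
        simp [apply_ite card, prod_ite, filter_not, compl_eq_univ_sdiff]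
    _ = Fintype.card A ^ (Fintype.card E - #S) := by rw [card_compl]

variable [Fintype E] {head tail : E → V} {b : V → A} {S : Finset E}

theorem single_sub_single_mem_map_bdryHom {u v : V} (h : Reach head tail (· ∉ S) u v) (a : A) :
    Pi.single u a - Pi.single v a ∈ (chainsOff A S).map (bdryHom A head tail) := by
  set B := (chainsOff A S).map (bdryHom A head tail)
  refine h.of_forall_edge (r := fun u v => Pi.single u a - Pi.single v a ∈ B)
    ⟨fun u => ?_, fun h => ?_, fun h₁ h₂ => ?_⟩ fun e he => ?_
  · simp
  · simpa using neg_mem h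
  · simpa using add_mem h₁ h₂
  · refine ⟨Pi.single e a, single_mem_chainsOff he a, ?_⟩
    simp only [bdryHom, AddMonoidHom.sub_apply, pushforward_single]

variable [Fintype V]

theorem compatible_of_bdry_eq {f : E → A} (hf : bdry head tail f = b) (hS : f ∈ chainsOff A S) :
    Compatible head tail (· ∉ S) b := by
  rw [compatible_iff_pushforward_eq_zero, ← hf, pushforward_bdry, bdry_eq_sum_single]
  refine sum_eq_zero fun e _ => ?_
  by_cases he : e ∈ S
  · simp [mem_chainsOff.1 hS e he]
  · rw [Function.comp_apply, Function.comp_apply,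
      component_head_eq_tail (ok := fun e => e ∉ S) he, sub_self]

theorem mem_map_bdryHom_of_compatible (hb : Compatible head tail (· ∉ S) b) :
    b ∈ (chainsOff A S).map (bdryHom A head tail) := by
  have := Fintype.ofFinite (Quotient (Relation.EqvGen.setoid (edgeRel head tail (· ∉ S))))
  let root := Function.surjInv (component_surjective (head := head) (tail := tail) (ok := (· ∉ S)))
  have hroot (u : V) : Reach head tail (· ∉ S) u (root (component head tail (· ∉ S) u)) :=
    component_eq_iff.1 (Function.surjInv_eq component_surjective _).symm
  have hb' : b = bdry id (root ∘ component head tail (· ∉ S)) b := by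
    rw [← bdryHom_apply, bdryHom, AddMonoidHom.sub_apply, pushforward_id,
      ← pushforward_pushforward, compatible_iff_pushforward_eq_zero.1 hb, map_zero, sub_zero]
  rw [hb', bdry_eq_sum_single]
  exact sum_mem fun u _ => single_sub_single_mem_map_bdryHom (hroot u) (b u)

theorem map_bdryHom_chainsOff :
    (chainsOff A S).map (bdryHom A head tail) =
      (pushforward (component head tail (· ∉ S)) : (V → A) →+ _).ker := by
  ext b
  rw [AddMonoidHom.mem_ker, ← compatible_iff_pushforward_eq_zero]
  refine ⟨?_, mem_map_bdryHom_of_compatible⟩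
  rintro ⟨f, hf, rfl⟩
  exact compatible_of_bdry_eq (bdryHom_apply head tail f).symm hf

end Flows

section Counting

theorem card_fiber_mul_card_range {G H : Type*} [AddGroup G] [AddGroup H] (φ : G →+ H) {y : H}
    (hy : y ∈ φ.range) : Nat.card {x // φ x = y} * Nat.card φ.range = Nat.card G := by
  obtain ⟨x₀, rfl⟩ := hy
  have hfib : Nat.card {x // φ x = φ x₀} = Nat.card φ.ker :=
    Nat.card_congr <| (Equiv.addRight (-x₀)).subtypeEquiv fun x => by
      simp [AddMonoidHom.mem_ker, add_neg_eq_zero]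
  rw [hfib, ← AddSubgroup.index_ker, AddSubgroup.card_mul_index]

theorem card_ker_pushforward_mul {X Y A : Type*} [Fintype X] [Fintype A] [AddCommGroup A]
    {π : X → Y} (hπ : Function.Surjective π) :
    Nat.card (pushforward π : (X → A) →+ (Y → A)).ker * Fintype.card A ^ Nat.card Y =
      Fintype.card A ^ Fintype.card X := by
  have := Finite.of_surjective π hπ
  have h := (pushforward π : (X → A) →+ (Y → A)).ker.card_mul_index
  rwa [AddSubgroup.index_ker, AddMonoidHom.range_eq_top.2 (pushforward_surjective hπ),
    AddSubgroup.card_top, Nat.card_fun, Nat.card_fun, Nat.card_eq_fintype_card (α := A),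
    Nat.card_eq_fintype_card (α := X)] at h

variable {V E A : Type*} [AddCommGroup A] [Fintype E] [Fintype V] {head tail : E → V}
  {b : V → A} {S : Finset E}

/-- The number of `(A, b)`-flows of `G - S`, encoded as the flows of `G` that vanish on `S`. -/
noncomputable def numFlowsOff (head tail : E → V) (b : V → A) (S : Finset E) : ℕ :=
  Nat.card {f : E → A // bdry head tail f = b ∧ ∀ e ∈ S, f e = 0}

theorem compatible_of_numFlowsOff_ne_zero (h : numFlowsOff head tail b S ≠ 0) :
    Compatible head tail (· ∉ S) b := by
  obtain ⟨⟨f, hf, hS⟩⟩ := (Nat.card_ne_zero.1 h).1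
  exact compatible_of_bdry_eq hf (mem_chainsOff.2 hS)

theorem numFlowsOff_eq_zero (hb : ¬Compatible head tail (· ∉ S) b) :
    numFlowsOff head tail b S = 0 := by
  contrapose! hb
  exact compatible_of_numFlowsOff_ne_zero hb

theorem numFlowsOff_pos [Finite A] (hb : Compatible head tail (· ∉ S) b) :
    0 < numFlowsOff head tail b S := by
  obtain ⟨f, hf, hfb⟩ := mem_map_bdryHom_of_compatible hb
  have : Nonempty {f : E → A // bdry head tail f = b ∧ ∀ e ∈ S, f e = 0} :=
    ⟨f, bdryHom_apply head tail f ▸ hfb, mem_chainsOff.1 hf⟩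
  exact Nat.card_pos

variable [Fintype A]

theorem numFlowsOff_mul_card_map (hb : Compatible head tail (· ∉ S) b) :
    numFlowsOff head tail b S * Nat.card ((chainsOff A S).map (bdryHom A head tail)) =
      Fintype.card A ^ (Fintype.card E - #S) := by
  set φ := (bdryHom A head tail).domRestrict (chainsOff A S)
  have hrange : φ.range = (chainsOff A S).map (bdryHom A head tail) :=
    AddMonoidHom.domRestrict_range _ _
  have hfib : numFlowsOff head tail b S = Nat.card {f // φ f = b} := by
    refine Nat.card_congr <| .symm <| (Equiv.subtypeSubtypeEquivSubtypeInter (· ∈ chainsOff A S)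
      (fun f => bdryHom A head tail f = b)).trans <| Equiv.subtypeEquivRight fun f => ?_
    rw [bdryHom_apply, mem_chainsOff, and_comm]
  rw [← hrange, hfib, card_fiber_mul_card_range φ (hrange ▸ mem_map_bdryHom_of_compatible hb),
    card_chainsOff]

theorem numFlowsOff_mul_pow (hb : Compatible head tail (· ∉ S) b) :
    numFlowsOff head tail b S * Fintype.card A ^ Fintype.card V =
      Fintype.card A ^ (Fintype.card E - #S + ncomp head tail (· ∉ S)) := by
  rw [← card_ker_pushforward_mul (component_surjective (head := head) (tail := tail)),
    ← map_bdryHom_chainsOff, ← mul_assoc, numFlowsOff_mul_card_map hb, ← pow_add]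
  rfl

-- The zero flow shows that the number of `ZMod 2`-flows, a power of two, is at least `2 ^ 0`.
theorem card_vertices_le (head tail : E → V) (S : Finset E) :
    Fintype.card V ≤ Fintype.card E - #S + ncomp head tail (· ∉ S) := by
  have hzero : Compatible head tail (· ∉ S) (0 : V → ZMod 2) := fun v => by simp
  have hcount := numFlowsOff_mul_pow hzero
  rw [ZMod.card] at hcount
  rw [← Nat.pow_le_pow_iff_right (le_refl 2), ← hcount]
  exact Nat.le_mul_of_pos_left _ (numFlowsOff_pos hzero)

theorem numFlowsOff_eq_pow (hb : Compatible head tail (· ∉ S) b) :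
    numFlowsOff head tail b S = Fintype.card A ^ cycRank head tail S := by
  refine Nat.eq_of_mul_eq_mul_right (pow_pos (Fintype.card_pos (α := A)) (Fintype.card V)) ?_
  rw [numFlowsOff_mul_pow hb, ← pow_add, cycRank, Nat.sub_add_cancel (card_vertices_le head tail S)]

theorem cycRank_add_card (h : ncomp head tail (· ∉ S) = ncomp head tail fun _ => True) :
    cycRank head tail S + #S = cycRank head tail ∅ := by
  have hV := card_vertices_le head tail S
  have hS := card_le_univ S
  simp only [cycRank, h, card_empty, notMem_empty, not_false_eq_true] at hV ⊢
  omega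

end Counting

section Bond

variable {V E A : Type*} [AddCommGroup A] {head tail : E → V} {F S : Finset E}
  {e : E}

theorem exists_isBond_subset (h : ncomp head tail (· ∉ S) ≠ ncomp head tail fun _ => True) :
    ∃ F ⊆ S, IsBond head tail F := by
  obtain ⟨F, hFS, hF⟩ := exists_minimal_le_of_wellFoundedLT
    (fun F : Finset E => ncomp head tail (· ∉ F) ≠ ncomp head tail fun _ => True) S h
  refine ⟨F, hFS, nonempty_iff_ne_empty.2 ?_, hF.prop, fun F' hF' => ?_⟩
  · rintro rfl
    simpa using hF.prop
  · exact not_not.1 (hF.not_prop_of_lt hF')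

-- Otherwise `e` joins vertices already connected in `G - F`, so `F.erase e` is a smaller cut.
theorem IsBond.component_ne (hF : IsBond head tail F) (he : e ∈ F) :
    component head tail (· ∉ F) (head e) ≠ component head tail (· ∉ F) (tail e) := by
  intro h
  refine hF.2.1 ((ncomp_eq_of_forall_edge (fun x hx => ?_) fun x hx => ?_).trans
    (hF.2.2 (F.erase e) (erase_ssubset he)))
  · exact component_eq_iff.1 (component_head_eq_tail fun h => hx (mem_of_mem_erase h))
  · rcases eq_or_ne x e with rfl | hxe
    · exact component_eq_iff.1 h
    · exact component_eq_iff.1 (component_head_eq_tail fun h => hx (mem_erase.2 ⟨hxe, h⟩))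

variable [Fintype V] [Fintype E] {b : V → A}

-- Contract the components of `G - F`: the boundary becomes zero by compatibility, while among the
-- edges carrying a nonzero value only `e` can avoid becoming a loop.
theorem IsCBond.apply_eq_zero (hF : IsCBond head tail b F) (he : e ∈ F) {f : E → A}
    (hf : bdry head tail f = b) (h : ∀ x ∈ F, x ≠ e → f x = 0) : f e = 0 := by
  set π := component head tail (· ∉ F)
  have hloop (x : E) (hx : x ∉ F) : π (head x) = π (tail x) := component_head_eq_tail hx
  have hvanish : bdry (π ∘ head) (π ∘ tail) f (π (head e)) = 0 := by
    rw [← pushforward_bdry, hf, compatible_iff_pushforward_eq_zero.1 hF.2, Pi.zero_apply]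
  have hvalue : bdry (π ∘ head) (π ∘ tail) f (π (head e)) = f e := by
    rw [bdry, Fintype.sum_eq_single e fun x hx => ?_]
    · simp [(hF.1.component_ne he).symm, π]
    · by_cases hxF : x ∈ F
      · simp [h x hxF hx]
      · rw [Function.comp_apply, Function.comp_apply, hloop x hxF, sub_self]
  exact hvalue.symm.trans hvanish

end Bond

section Expansion

variable {V E A : Type*} [Fintype V] [AddCommGroup A] {head tail : E → V}
  {lo : LinearOrder E} {b : V → A} {S : Finset E} {e : E}

theorem exists_isCBrokenBond_subset_iff :
    (∃ B, IsCBrokenBond head tail lo b B ∧ B ⊆ S) ↔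
      ∃ e, IsPivot {F | IsCBond head tail b F} S e := by
  constructor
  · rintro ⟨_, ⟨F, hF, hne, rfl⟩, hB⟩
    exact ⟨F.max' hne, F, hF, F.isGreatest_max' hne, fun x hx hxe => hB (mem_erase.2 ⟨hxe, hx⟩)⟩
  · rintro ⟨e, F, hF, he, hS⟩
    have hmax : F.max' ⟨e, he.1⟩ = e := (F.isGreatest_max' _).unique he
    refine ⟨_, ⟨F, hF, ⟨e, he.1⟩, rfl⟩, fun x hx => ?_⟩
    rw [hmax, mem_erase] at hx
    exact hS x hx.2 hx.1

theorem numFlowsOff_insert_of_isPivot [Fintype E] (h : IsPivot {F | IsCBond head tail b F} S e) :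
    numFlowsOff head tail b (insert e S) = numFlowsOff head tail b S := by
  obtain ⟨F, hF, he, hS⟩ := h
  refine Nat.card_congr <| Equiv.subtypeEquivRight fun f => and_congr_right fun hf => ?_
  rw [forall_mem_insert, and_iff_right_iff_imp]
  exact fun h => hF.apply_eq_zero he.1 hf fun x hx hxe => h x (hS x hx hxe)

/-- The edge sets counted by the coefficients `a_i(G, b)`: `G - S` is `b`-compatible and `S`
contains no `b`-compatible broken bond. -/
def IsAdmissible (head tail : E → V) (lo : LinearOrder E) (b : V → A) (S : Finset E) : Prop :=
  Compatible head tail (· ∉ S) b ∧ ∀ B, IsCBrokenBond head tail lo b B → ¬B ⊆ S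

theorem isAdmissible_iff :
    IsAdmissible head tail lo b S ↔ Compatible head tail (· ∉ S) b ∧
      ¬∃ e, IsPivot {F | IsCBond head tail b F} S e := by
  rw [IsAdmissible, ← exists_isCBrokenBond_subset_iff]
  push Not
  rfl

-- A bond inside `S` would be `b`-compatible because `G - S` is.
theorem IsAdmissible.ncomp_eq (hS : IsAdmissible head tail lo b S) :
    ncomp head tail (· ∉ S) = ncomp head tail fun _ => True := by
  by_contra h
  obtain ⟨F, hFS, hF⟩ := exists_isBond_subset h
  have hFb : Compatible head tail (· ∉ F) b := hS.1.mono fun e he heF => he (hFS heF)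
  exact hS.2 _ ⟨F, ⟨hF, hFb⟩, hF.1, rfl⟩ ((erase_subset _ _).trans hFS)

variable [Fintype E]

theorem IsAdmissible.card_le_cycRank (hS : IsAdmissible head tail lo b S) :
    #S ≤ cycRank head tail (∅ : Finset E) :=
  (Nat.le_add_left _ _).trans_eq (cycRank_add_card hS.ncomp_eq)

theorem IsAdmissible.numFlowsOff_eq [Fintype A] (hS : IsAdmissible head tail lo b S) :
    numFlowsOff head tail b S = Fintype.card A ^ (cycRank head tail (∅ : Finset E) - #S) := by
  rw [numFlowsOff_eq_pow hS.1, ← cycRank_add_card hS.ncomp_eq, Nat.add_sub_cancel]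

theorem aCoeff_eq_card (i : ℕ) :
    aCoeff head tail lo b i = #{S ∈ ({S | IsAdmissible head tail lo b S} : Finset _) | #S = i} :=
  Nat.subtype_card _ fun S => by
    simp only [mem_filter, mem_univ, true_and, and_comm (b := #S = i)]
    rfl

theorem sum_isAdmissible {R : Type*} [Semiring R] (g : ℕ → R) :
    ∑ S with IsAdmissible head tail lo b S, g #S =
      ∑ i ∈ range (cycRank head tail (∅ : Finset E) + 1), aCoeff head tail lo b i * g i := by
  have hmaps (S) (hS : S ∈ ({S | IsAdmissible head tail lo b S} : Finset _)) :
      #S ∈ range (cycRank head tail (∅ : Finset E) + 1) :=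
    mem_range_succ_iff.2 ((mem_filter_univ S).1 hS).card_le_cycRank
  rw [← sum_fiberwise_of_maps_to' hmaps]
  simp only [sum_const, nsmul_eq_mul, aCoeff_eq_card]

theorem sum_not_isPivot_eq_sum_isAdmissible [Fintype A] :
    ∑ S with ¬∃ e, IsPivot {F | IsCBond head tail b F} S e,
        (-1 : ℤ) ^ #S * (numFlowsOff head tail b S : ℤ) =
      ∑ S with IsAdmissible head tail lo b S,
        (-1 : ℤ) ^ #S * (Fintype.card A : ℤ) ^ (cycRank head tail (∅ : Finset E) - #S) := by
  refine (sum_subset_zero_on_sdiff (fun S hS => ?_) (fun S hS => ?_) fun S hS => ?_).symm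
  · exact (mem_filter_univ S).2 (isAdmissible_iff.1 ((mem_filter_univ S).1 hS)).2
  · obtain ⟨hpivot, hS⟩ := mem_sdiff.1 hS
    rw [mem_filter_univ] at hpivot hS
    rw [numFlowsOff_eq_zero fun hb => hS (isAdmissible_iff.2 ⟨hb, hpivot⟩), Nat.cast_zero, mul_zero]
  · rw [((mem_filter_univ S).1 hS).numFlowsOff_eq, Nat.cast_pow]

end Expansion

theorem stmt11_general {V E A : Type*} [Fintype V] [Fintype E] [AddCommGroup A] [Fintype A]
    (head tail : E → V) (lo : LinearOrder E) (b : V → A) :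
    (Nat.card {f : E → A // bdry head tail f = b ∧ ∀ e, f e ≠ 0} : ℤ) =
      ∑ i ∈ Finset.range (cycRank head tail (∅ : Finset E) + 1),
        (-1 : ℤ) ^ i * (aCoeff head tail lo b i : ℤ) *
          (Fintype.card A : ℤ) ^ (cycRank head tail (∅ : Finset E) - i) := by
  set m := cycRank head tail (∅ : Finset E)
  calc (Nat.card {f : E → A // bdry head tail f = b ∧ ∀ e, f e ≠ 0} : ℤ)
      = ∑ S : Finset E, (-1) ^ #S * (numFlowsOff head tail b S : ℤ) :=
        card_forall_not_eq_sum (fun f => bdry head tail f = b) fun e f => f e = 0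
    _ = ∑ S with ¬∃ e, IsPivot {F | IsCBond head tail b F} S e,
          (-1) ^ #S * (numFlowsOff head tail b S : ℤ) :=
        sum_neg_one_pow_card_mul_eq_sum_not_isPivot fun S e h =>
          congrArg Nat.cast (numFlowsOff_insert_of_isPivot h)
    _ = ∑ S with IsAdmissible head tail lo b S, (-1) ^ #S * (Fintype.card A : ℤ) ^ (m - #S) :=
        sum_not_isPivot_eq_sum_isAdmissible
    _ = ∑ i ∈ range (m + 1),
          (aCoeff head tail lo b i : ℤ) * ((-1) ^ i * (Fintype.card A : ℤ) ^ (m - i)) :=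
        sum_isAdmissible fun i => (-1) ^ i * (Fintype.card A : ℤ) ^ (m - i)
    _ = _ := sum_congr rfl fun i _ => by ring

/-- broken-bond expansion of the number of nowhere-zero `(A,b)`-flows. -/
theorem stmt11 {V E A : Type*} [Fintype V] [Fintype E] [AddCommGroup A] [Fintype A]
    (head tail : E → V) (lo : LinearOrder E) (b : V → A)
    (hb : Compatible head tail (fun _ => True) b) :
    (Nat.card {f : E → A // bdry head tail f = b ∧ ∀ e, f e ≠ 0} : ℤ) =
      ∑ i ∈ Finset.range (cycRank head tail (∅ : Finset E) + 1),
        (-1 : ℤ) ^ i * (aCoeff head tail lo b i : ℤ) *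
          (Fintype.card A : ℤ) ^ (cycRank head tail (∅ : Finset E) - i) :=
  stmt11_general head tail lo b
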